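/- arXiv:2002.09388 — 2 statements merged into one kernel-verified Lean document; each statement's English description precedes it below -/
import Mathlib

section
/- For every γ = [[a,b],[c,d]] ∈ SL(2,ℤ) and every τ ∈ ℍ, the matrix-valued function e satisfies the weight-2 equivariance law e(γ·τ) · γ = (cτ+d)² γ · e(τ), where γ is regarded as a matrix in M₂(ℂ); equivalently e(γ·τ) = (cτ+d)² γ e(τ) γ⁻¹. -/
open Matrix Complex

noncomputable section

abbrev SL2Z := Matrix.SpecialLinearGroup (Fin 2) ℤ

/-- Möbius action of `SL(2,ℤ)` on the upper half plane, as a formula on `ℂ`. -/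
def moebius (γ : SL2Z) (τ : ℂ) : ℂ :=
  ((γ 0 0 : ℂ) * τ + (γ 0 1 : ℂ)) / ((γ 1 0 : ℂ) * τ + (γ 1 1 : ℂ))

/-- `γ ∈ SL(2,ℤ)` regarded as a matrix in `M₂(ℂ)`. -/
def toMatC (γ : SL2Z) : Matrix (Fin 2) (Fin 2) ℂ :=
  (γ : Matrix (Fin 2) (Fin 2) ℤ).map (Int.cast : ℤ → ℂ)

/-- σ₁(n), the sum of the divisors of `n`. -/
def sigma1 (n : ℕ) : ℕ := ∑ d ∈ n.divisors, d

/-- The weight 2 Eisenstein series `E₂(τ) = 1 - 24 ∑_{n ≥ 1} σ₁(n) e^{2πinτ}`. -/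
def E2 (τ : ℂ) : ℂ :=
  1 - 24 * ∑' n : ℕ, (sigma1 (n + 1) : ℂ) *
    Complex.exp (2 * (Real.pi : ℂ) * Complex.I * ((n : ℂ) + 1) * τ)

/-- `π` as a complex number. -/
def piC : ℂ := (Real.pi : ℂ)

/-- The matrix-valued modular form `f(τ)` of weight `-2`. -/
def fM (τ : ℂ) : Matrix (Fin 2) (Fin 2) ℂ := !![τ, -τ ^ 2; 1, -τ]

/-- The matrix-valued modular form `h(τ)` of weight `0`. -/
def hM (τ : ℂ) : Matrix (Fin 2) (Fin 2) ℂ :=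
  !![Complex.I * piC * τ / 3 * E2 τ + 1, -(Complex.I * piC * τ ^ 2 / 3) * E2 τ - 2 * τ;
     Complex.I * piC / 3 * E2 τ, -(Complex.I * piC * τ / 3) * E2 τ - 1]

/-- The matrix-valued modular form `e(τ)` of weight `2`. -/
def eM (τ : ℂ) : Matrix (Fin 2) (Fin 2) ℂ :=
  !![piC ^ 2 * τ / 36 * E2 τ ^ 2 - Complex.I * piC / 6 * E2 τ,
       -(piC ^ 2 * τ ^ 2 / 36) * E2 τ ^ 2 + Complex.I * piC * τ / 3 * E2 τ + 1;
     piC ^ 2 / 36 * E2 τ ^ 2,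
       -(piC ^ 2 * τ / 36) * E2 τ ^ 2 + Complex.I * piC / 6 * E2 τ]

/-- The matrix `Φ₁(τ)`. -/
def Phi1 (τ : ℂ) : Matrix (Fin 2) (Fin 2) ℂ :=
  !![Complex.I * piC * τ / 6 * E2 τ + 1, τ; Complex.I * piC / 6 * E2 τ, 1]

/-!
With `x(τ) = (iπ/6) E₂(τ)` and `N = !![0, 1; 0, 0]`, the matrix `Φ₁(τ)` has determinant one and
`e(τ) = Φ₁(τ) N Φ₁(τ)⁻¹`. The quasimodularity of `E₂` says exactly that
`Φ₁(γ·τ) = γ Φ₁(τ) diag(j, j⁻¹)` with `j = cτ + d`, and conjugation by `diag(j, j⁻¹)` multiplies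
`N` by `j²`. Inverses of matrices of determinant one are written as adjugates.
-/

theorem E2_coe_eq_eisensteinSeriesE2 (z : UpperHalfPlane) :
    E2 (z : ℂ) = EisensteinSeries.E2 z := by
  rw [EisensteinSeries.E2_eq_tsum_cexp, E2,
    tsum_pnat_eq_tsum_succ (f := fun n : ℕ ↦ (ArithmeticFunction.sigma 1 n : ℂ) *
      (Complex.exp (2 * (Real.pi : ℂ) * Complex.I * (z : ℂ))) ^ n)]
  congr 2
  refine tsum_congr fun n ↦ ?_
  rw [ArithmeticFunction.sigma_one_apply, sigma1, ← Complex.exp_nat_mul]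
  congr 2
  push_cast
  ring

theorem moebius_coe (γ : SL2Z) (z : UpperHalfPlane) :
    moebius γ z = ((γ • z : UpperHalfPlane) : ℂ) := by
  rw [UpperHalfPlane.coe_specialLinearGroup_apply, moebius]
  simp only [algebraMap_int_eq, eq_intCast, Complex.ofReal_intCast]

theorem E2_moebius (γ : SL2Z) (z : UpperHalfPlane) :
    E2 (moebius γ z) = UpperHalfPlane.denom γ z ^ 2 * E2 z -
      6 * Complex.I * (γ 1 0 : ℂ) * UpperHalfPlane.denom γ z / (Real.pi : ℂ) := by
  have hj : UpperHalfPlane.denom γ z ≠ 0 := UpperHalfPlane.denom_ne_zero γ z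
  have hslash := congrFun (EisensteinSeries.E2_slash_action γ) z
  rw [ModularForm.SL_slash_apply, Pi.sub_apply, Pi.smul_apply, EisensteinSeries.D2,
    ← E2_coe_eq_eisensteinSeriesE2, ← E2_coe_eq_eisensteinSeriesE2, ← moebius_coe,
    riemannZeta_two, smul_eq_mul, _root_.zpow_neg,
    mul_inv_eq_iff_eq_mul₀ (zpow_ne_zero _ hj)] at hslash
  rw [hslash, zpow_ofNat]
  field_simp

/-- The function `x(τ) = (iπ/6) E₂(τ)`, the rescaling of `E₂` whose modular anomaly is
`c (cτ + d)`; it is the lower left entry of `Φ₁(τ)`. -/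
def scaledE2 (τ : ℂ) : ℂ := Complex.I * piC / 6 * E2 τ

theorem scaledE2_moebius (γ : SL2Z) (z : UpperHalfPlane) :
    scaledE2 (moebius γ z) = UpperHalfPlane.denom γ z ^ 2 * scaledE2 z +
      (γ 1 0 : ℂ) * UpperHalfPlane.denom γ z := by
  have hpi : (Real.pi : ℂ) ≠ 0 := Complex.ofReal_ne_zero.mpr Real.pi_ne_zero
  rw [scaledE2, scaledE2, E2_moebius, piC]
  field_simp
  linear_combination -6 * (γ 1 0 : ℂ) * Complex.I_sq

theorem toMatC_eq_of (γ : SL2Z) :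
    toMatC γ = !![(γ 0 0 : ℂ), (γ 0 1 : ℂ); (γ 1 0 : ℂ), (γ 1 1 : ℂ)] :=
  eta_fin_two (toMatC γ)

theorem det_toMatC (γ : SL2Z) : (toMatC γ).det = 1 := by
  have hdet := γ.det_coe
  rw [det_fin_two] at hdet
  rw [toMatC_eq_of, det_fin_two_of]
  exact_mod_cast hdet

theorem toMatC_mul_upper_unitriangular (γ : SL2Z) {τ : ℂ}
    (hj : (γ 1 0 : ℂ) * τ + (γ 1 1 : ℂ) ≠ 0) :
    toMatC γ * !![1, τ; 0, 1] = !![1, moebius γ τ; 0, 1] *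
      !![((γ 1 0 : ℂ) * τ + (γ 1 1 : ℂ))⁻¹, 0; (γ 1 0 : ℂ), (γ 1 0 : ℂ) * τ + (γ 1 1 : ℂ)] := by
  have hnum : (γ 0 0 : ℂ) * τ + (γ 0 1 : ℂ) =
      moebius γ τ * ((γ 1 0 : ℂ) * τ + (γ 1 1 : ℂ)) :=
    (div_mul_cancel₀ _ hj).symm
  have hcorner : (γ 0 0 : ℂ) =
      ((γ 1 0 : ℂ) * τ + (γ 1 1 : ℂ))⁻¹ + moebius γ τ * (γ 1 0 : ℂ) := by
    have hdet : (γ 0 0 : ℂ) * (γ 1 1 : ℂ) - (γ 0 1 : ℂ) * (γ 1 0 : ℂ) = 1 := by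
      simpa only [toMatC_eq_of, det_fin_two_of] using det_toMatC γ
    rw [moebius]
    field_simp
    linear_combination hdet
  rw [toMatC_eq_of, mul_fin_two, mul_fin_two]
  simp only [EmbeddingLike.apply_eq_iff_eq, vecCons_inj, mul_one, mul_zero, one_mul, zero_mul,
    add_zero, zero_add, and_true]
  exact ⟨hcorner, hnum⟩

theorem Phi1_eq_mul (τ : ℂ) : Phi1 τ = !![1, τ; 0, 1] * !![1, 0; scaledE2 τ, 1] := by
  have hcorner : Complex.I * piC * τ / 6 * E2 τ + 1 = 1 + τ * scaledE2 τ := by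
    rw [scaledE2]
    ring
  rw [Phi1, hcorner, ← scaledE2, mul_fin_two]
  simp only [mul_one, mul_zero, one_mul, zero_add]

theorem lower_mul_unitriangular_mul_diag {K : Type*} [Field K] {j : K} (hj : j ≠ 0) (c x : K) :
    !![j⁻¹, 0; c, j] * !![1, 0; x, 1] * !![j, 0; 0, j⁻¹] = !![1, 0; j ^ 2 * x + c * j, 1] := by
  have hcorner : (c + j * x) * j = j ^ 2 * x + c * j := by ring
  simp [hj, hcorner]

theorem Phi1_moebius (γ : SL2Z) (z : UpperHalfPlane) :
    Phi1 (moebius γ z) = toMatC γ * Phi1 z *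
      !![UpperHalfPlane.denom γ z, 0; 0, (UpperHalfPlane.denom γ z)⁻¹] := by
  have hj : UpperHalfPlane.denom γ z ≠ 0 := UpperHalfPlane.denom_ne_zero γ z
  rw [Phi1_eq_mul, Phi1_eq_mul, scaledE2_moebius, ← lower_mul_unitriangular_mul_diag hj,
    ← mul_assoc (toMatC γ), toMatC_mul_upper_unitriangular γ hj, ModularGroup.denom_apply]
  simp only [mul_assoc]

theorem eM_eq_Phi1_conj (τ : ℂ) : eM τ = Phi1 τ * !![0, 1; 0, 0] * (Phi1 τ).adjugate := by
  rw [eM, Phi1, adjugate_fin_two_of, mul_fin_two, mul_fin_two]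
  simp only [EmbeddingLike.apply_eq_iff_eq, vecCons_inj, and_true]
  refine ⟨⟨?_, ?_⟩, ?_, ?_⟩
  · linear_combination (piC ^ 2 * τ / 36 * E2 τ ^ 2) * Complex.I_sq
  · linear_combination (-piC ^ 2 * τ ^ 2 / 36 * E2 τ ^ 2) * Complex.I_sq
  · linear_combination (piC ^ 2 / 36 * E2 τ ^ 2) * Complex.I_sq
  · linear_combination (-piC ^ 2 * τ / 36 * E2 τ ^ 2) * Complex.I_sq

theorem diag_mul_nilpotent_mul_adjugate {R : Type*} [CommRing R] (a d : R) :
    !![a, 0; 0, d] * !![0, 1; 0, 0] * (!![a, 0; 0, d]).adjugate = a ^ 2 • !![0, 1; 0, 0] := by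
  ext i k
  fin_cases i <;> fin_cases k <;> simp [adjugate_fin_two_of, pow_two]

/-- the weight 2 equivariance law `e(γ·τ)·γ = (cτ+d)² γ·e(τ)`. -/
theorem eM_weight_two_equivariance (γ : SL2Z) (τ : ℂ) (hτ : 0 < τ.im) :
    eM (moebius γ τ) * toMatC γ =
      ((γ 1 0 : ℂ) * τ + (γ 1 1 : ℂ)) ^ 2 • (toMatC γ * eM τ) := by
  lift τ to UpperHalfPlane using hτ
  rw [← ModularGroup.denom_apply]
  set j := UpperHalfPlane.denom γ τ
  have hadj : (toMatC γ).adjugate * toMatC γ = 1 := by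
    rw [adjugate_mul, det_toMatC, one_smul]
  calc eM (moebius γ τ) * toMatC γ
      = toMatC γ * Phi1 τ * (!![j, 0; 0, j⁻¹] * !![0, 1; 0, 0] * (!![j, 0; 0, j⁻¹]).adjugate) *
          (Phi1 τ).adjugate * ((toMatC γ).adjugate * toMatC γ) := by
        rw [eM_eq_Phi1_conj, Phi1_moebius, adjugate_mul_distrib, adjugate_mul_distrib]
        simp only [mul_assoc, j]
    _ = j ^ 2 • (toMatC γ * (Phi1 τ * !![0, 1; 0, 0] * (Phi1 τ).adjugate)) := by
        rw [diag_mul_nilpotent_mul_adjugate, hadj, mul_one, Matrix.mul_smul, Matrix.smul_mul]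
        simp only [mul_assoc]
    _ = j ^ 2 • (toMatC γ * eM τ) := by rw [← eM_eq_Phi1_conj]

end
end

section
/- For every τ ∈ ℍ the fourth powers of the theta constants are the following linear combinations of F₂(τ) = 2E₂(2τ) − E₂(τ) and H₂(τ) = 2E₂(τ) − E₂(τ/2): θ₂(τ)⁴ = −(2/3)F₂(τ) + (2/3)H₂(τ), θ₃(τ)⁴ = (2/3)F₂(τ) + (1/3)H₂(τ), and θ₄(τ)⁴ = (4/3)F₂(τ) − (1/3)H₂(τ). -/
open Matrix Complex

noncomputable section

/-- `F₂(τ) = 2E₂(2τ) − E₂(τ)`. -/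
def F₂ (τ : ℂ) : ℂ := 2 * E2 (2 * τ) - E2 τ

/-- `H₂(τ) = 2E₂(τ) − E₂(τ/2)`. -/
def H₂ (τ : ℂ) : ℂ := 2 * E2 τ - E2 (τ / 2)

/-- The theta constant `θ₂(τ) = ∑_{n ∈ ℤ} e^{πiτ(n+1/2)²}`. -/
def θ₂ (τ : ℂ) : ℂ :=
  ∑' n : ℤ, Complex.exp ((Real.pi : ℂ) * Complex.I * τ * ((n : ℂ) + 1 / 2) ^ 2)

/-- The theta constant `θ₃(τ) = ∑_{n ∈ ℤ} e^{πiτn²}`. -/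
def θ₃ (τ : ℂ) : ℂ :=
  ∑' n : ℤ, Complex.exp ((Real.pi : ℂ) * Complex.I * τ * (n : ℂ) ^ 2)

/-- The theta constant `θ₄(τ) = ∑_{n ∈ ℤ} (−1)ⁿ e^{πiτn²}`. -/
def θ₄ (τ : ℂ) : ℂ :=
  ∑' n : ℤ, (-1 : ℂ) ^ n * Complex.exp ((Real.pi : ℂ) * Complex.I * τ * (n : ℂ) ^ 2)

open Filter Topology MatrixGroups Manifold
open UpperHalfPlane hiding I

/-!
Both the fourth powers of the theta constants and the claimed combinations of `F₂` and `H₂` are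
holomorphic of weight 2, with limits `0, 1, 1` at `i∞`, and up to signs the generators of `SL(2, ℤ)`
permute them in the same way. So the three differences `x, y, z` (one with its sign changed) are
permuted up to a common sign, and `(x + y + z) ^ 2`, `x ^ 2 + y ^ 2 + z ^ 2` and
`(x - y) * (y - z) * (z - x)` are level one cusp forms of weight less than 12. Hence all three
vanish, which forces `x = y = z = 0`.

The action of `τ ↦ τ + 1` on `H₂` rests on a Hecke relation for `E₂`. In that relation the
quasi-modular corrections cancel, so the same vanishing theorem proves it, in weight 2.
-/

/-! ### Holomorphic functions with a limit at `i∞` -/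

local notation "I∞" => comap Complex.im atTop

/-- `f` is holomorphic on the upper half plane and tends to `c` at `i∞`; its values outside the
upper half plane play no role. With `c = 0` this is the analytic part of the definition of a level
one cusp form. -/
structure HolomorphicWithLimit (f : ℂ → ℂ) (c : ℂ) : Prop where
  differentiableOn : DifferentiableOn ℂ f upperHalfPlaneSet
  tendsto : Tendsto f I∞ (𝓝 c)

namespace HolomorphicWithLimit

variable {f g : ℂ → ℂ} {c d : ℂ}

lemma congr (hf : HolomorphicWithLimit f c) (h : ∀ ⦃τ : ℂ⦄, 0 < τ.im → g τ = f τ) :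
    HolomorphicWithLimit g c where
  differentiableOn := hf.differentiableOn.congr h
  tendsto := hf.tendsto.congr' <| by
    filter_upwards [preimage_mem_comap (Ioi_mem_atTop 0)] with τ hτ using (h hτ).symm

lemma add (hf : HolomorphicWithLimit f c) (hg : HolomorphicWithLimit g d) :
    HolomorphicWithLimit (fun τ ↦ f τ + g τ) (c + d) :=
  ⟨hf.differentiableOn.add hg.differentiableOn, hf.tendsto.add hg.tendsto⟩

lemma sub (hf : HolomorphicWithLimit f c) (hg : HolomorphicWithLimit g d) :
    HolomorphicWithLimit (fun τ ↦ f τ - g τ) (c - d) :=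
  ⟨hf.differentiableOn.sub hg.differentiableOn, hf.tendsto.sub hg.tendsto⟩

lemma neg (hf : HolomorphicWithLimit f c) : HolomorphicWithLimit (fun τ ↦ -f τ) (-c) :=
  ⟨hf.differentiableOn.neg, hf.tendsto.neg⟩

lemma mul (hf : HolomorphicWithLimit f c) (hg : HolomorphicWithLimit g d) :
    HolomorphicWithLimit (fun τ ↦ f τ * g τ) (c * d) :=
  ⟨hf.differentiableOn.mul hg.differentiableOn, hf.tendsto.mul hg.tendsto⟩

lemma pow (hf : HolomorphicWithLimit f c) (n : ℕ) :
    HolomorphicWithLimit (fun τ ↦ f τ ^ n) (c ^ n) :=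
  ⟨hf.differentiableOn.pow n, hf.tendsto.pow n⟩

lemma const_mul (hf : HolomorphicWithLimit f c) (a : ℂ) :
    HolomorphicWithLimit (fun τ ↦ a * f τ) (a * c) :=
  ⟨hf.differentiableOn.const_mul a, hf.tendsto.const_mul a⟩

lemma comp_affine (hf : HolomorphicWithLimit f c) {a : ℝ} (ha : 0 < a) (b : ℝ)
    (hg : ∀ τ, g τ = a * τ + b) : HolomorphicWithLimit (fun τ ↦ f (g τ)) c := by
  have im_g (τ : ℂ) : (g τ).im = a * τ.im := by simp [hg]
  have g_differentiable : Differentiable ℂ g := by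
    rw [funext hg]
    fun_prop
  refine ⟨hf.differentiableOn.comp g_differentiable.differentiableOn fun τ hτ ↦ ?_,
    hf.tendsto.comp (tendsto_comap_iff.mpr ?_)⟩
  · exact (mul_pos ha hτ).trans_eq (im_g τ).symm
  · simpa only [Function.comp_def, im_g] using tendsto_comap.const_mul_atTop ha

end HolomorphicWithLimit

lemma periodic_comp_ofComplex_of_hasSum_qExpansion {f : ℍ → ℂ} {a : ℕ → ℂ} {h : ℝ} (hh : h ≠ 0)
    (hsum : ∀ z : ℍ, HasSum (fun n ↦ a n • Function.Periodic.qParam h z ^ n) (f z)) :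
    Function.Periodic (f ∘ ofComplex) h := fun τ ↦ by
  have im_eq : (τ + h).im = τ.im := by simp
  rcases le_or_gt τ.im 0 with hτ | hτ
  · simp only [Function.comp_apply, ofComplex_apply_of_im_nonpos hτ,
      ofComplex_apply_of_im_nonpos (im_eq.trans_le hτ)]
  · have qParam_add : Function.Periodic.qParam h (τ + h) = Function.Periodic.qParam h τ := by
      rw [Function.Periodic.qParam, mul_add, add_div,
        mul_div_cancel_right₀ _ (ofReal_ne_zero.mpr hh), exp_periodic]
      rfl
    have hsum_add := hsum ⟨τ + h, hτ.trans_eq im_eq.symm⟩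
    simp only [qParam_add] at hsum_add
    simpa only [Function.comp_apply, ofComplex_apply_of_im_pos hτ,
      ofComplex_apply_of_im_pos (hτ.trans_eq im_eq.symm)] using hsum_add.unique (hsum ⟨τ, hτ⟩)

lemma HolomorphicWithLimit.of_hasSum_qExpansion {f : ℍ → ℂ} {a : ℕ → ℂ} {h : ℝ} (hh : 0 < h)
    (hf : MDiff f)
    (hsum : ∀ z : ℍ, HasSum (fun n ↦ a n • Function.Periodic.qParam h z ^ n) (f z)) :
    HolomorphicWithLimit (f ∘ ofComplex) (a 0) := by
  have periodic := periodic_comp_ofComplex_of_hasSum_qExpansion hh.ne' hsum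
  have analytic := analyticAt_cuspFunction_zero hh periodic hf
    (isBoundedAtImInfty_of_hasSum_qExpansion hh hsum)
  have value : a 0 = cuspFunction h f 0 := by
    simpa using (hasFPowerSeriesOnBall_cuspFunction hh analytic hsum).hasFPowerSeriesAt.coeff_zero 0
  have qParam_tendsto : Tendsto (Function.Periodic.qParam h) I∞ (𝓝 0) :=
    (Function.Periodic.qParam_tendsto hh).mono_right nhdsWithin_le_nhds
  refine ⟨mdifferentiable_iff.mp hf, ?_⟩
  rw [value, ← funext (Function.Periodic.eq_cuspFunction hh.ne' periodic)]
  exact analytic.continuousAt.tendsto.comp qParam_tendsto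

/-! ### Level one cusp forms of small weight -/

section LevelOne

variable {k : ℤ} {f : ℂ → ℂ}

lemma slash_eq_self_of_add_one_of_neg_one_div
    (hT : ∀ ⦃τ : ℂ⦄, 0 < τ.im → f (τ + 1) = f τ)
    (hS : ∀ ⦃τ : ℂ⦄, 0 < τ.im → f (-1 / τ) = τ ^ k * f τ) (γ : SL(2, ℤ)) :
    SlashAction.map k γ (fun z : ℍ ↦ f z) = fun z : ℍ ↦ f z := by
  refine SlashInvariantForm.slash_action_generators_SL2Z ?_ ?_ γ
  · ext z
    have hz : (z : ℂ) ^ k ≠ 0 := zpow_ne_zero k z.ne_zero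
    have coe_S : (-(z : ℂ))⁻¹ = -1 / z := by rw [inv_neg, neg_div, one_div]
    rw [SlashInvariantForm.slash_S_apply, coe_mk, coe_S, hS z.im_pos, _root_.zpow_neg,
      mul_right_comm, mul_inv_cancel₀ hz, one_mul]
  · ext z
    have denom_T : denom (ModularGroup.T : SL(2, ℤ)) (z : ℂ) = 1 := by
      simp [ModularGroup.denom_apply, ModularGroup.coe_T]
    rw [ModularForm.SL_slash_apply, modular_T_smul, denom_T, _root_.one_zpow, mul_one, coe_vadd,
      ofReal_one, add_comm, hT z.im_pos]

theorem HolomorphicWithLimit.eq_zero_of_weight_lt_twelve (hf : HolomorphicWithLimit f 0)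
    (hk : k < 12) (hT : ∀ ⦃τ : ℂ⦄, 0 < τ.im → f (τ + 1) = f τ)
    (hS : ∀ ⦃τ : ℂ⦄, 0 < τ.im → f (-1 / τ) = τ ^ k * f τ) {τ : ℂ} (hτ : 0 < τ.im) :
    f τ = 0 := by
  have slash_eq := slash_eq_self_of_add_one_of_neg_one_div hT hS
  let F : CuspForm 𝒮ℒ k :=
    { toFun := fun z ↦ f z
      slash_action_eq' := by
        rintro _ ⟨γ, rfl⟩
        exact slash_eq γ
      holo' := mdifferentiable_iff.mpr <| hf.differentiableOn.congr fun z hz ↦ by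
        simp [ofComplex_apply_of_im_pos hz]
      zero_at_cusps' := fun hc ↦ (OnePoint.isZeroAt_iff_forall_SL2Z hc).mpr fun γ _ ↦ by
        rw [slash_eq γ]
        exact hf.tendsto.comp tendsto_coe_atImInfty }
  have F_eq_zero : F = 0 :=
    rank_zero_iff_forall_zero.mp (CuspForm.rank_eq_zero_of_weight_lt_twelve hk) F
  exact DFunLike.congr_fun F_eq_zero ⟨τ, hτ⟩

end LevelOne

/-! ### Triples permuted up to sign by the modular group -/

lemma eq_zero_of_add_eq_zero_of_sq_add_eq_zero_of_vandermonde_eq_zero {R : Type*} [CommRing R]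
    [NoZeroDivisors R] (h6 : (6 : R) ≠ 0) {x y z : R} (h_sum : x + y + z = 0)
    (h_sq : x ^ 2 + y ^ 2 + z ^ 2 = 0) (h_vandermonde : (x - y) * (y - z) * (z - x) = 0) :
    x = 0 ∧ y = 0 ∧ z = 0 := by
  have eq_zero_of_eq {a b c : R} (hab : a - b = 0) (h_sum : a + b + c = 0)
      (h_sq : a ^ 2 + b ^ 2 + c ^ 2 = 0) : a = 0 ∧ b = 0 ∧ c = 0 := by
    obtain rfl : a = b := sub_eq_zero.mp hab
    obtain rfl : c = -2 * a := by linear_combination h_sum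
    have ha : a = 0 := by
      have : 6 * a ^ 2 = 0 := by linear_combination h_sq
      simpa [h6] using this
    simp [ha]
  rcases mul_eq_zero.mp h_vandermonde with h | hzx
  · rcases mul_eq_zero.mp h with hxy | hyz
    · exact eq_zero_of_eq hxy h_sum h_sq
    · obtain ⟨hy, hz, hx⟩ := eq_zero_of_eq hyz (c := x) (by linear_combination h_sum)
        (by linear_combination h_sq)
      exact ⟨hx, hy, hz⟩
  · obtain ⟨hz, hx, hy⟩ := eq_zero_of_eq hzx (c := y) (by linear_combination h_sum)
      (by linear_combination h_sq)
    exact ⟨hx, hy, hz⟩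

/-- The generators `τ ↦ τ + 1` and `τ ↦ -1 / τ` act on `(x, y, z)` in weight 2 by the negatives of
the transpositions `(y z)` and `(x z)`, so that suitable symmetric and alternating polynomials in
`x, y, z` are modular of level one. The signs are those of `(θ₂ ^ 4, -θ₃ ^ 4, θ₄ ^ 4)`. -/
structure IsWeightTwoTriple (x y z : ℂ → ℂ) : Prop where
  fst_add_one : ∀ ⦃τ : ℂ⦄, 0 < τ.im → x (τ + 1) = -x τ
  snd_add_one : ∀ ⦃τ : ℂ⦄, 0 < τ.im → y (τ + 1) = -z τ
  trd_add_one : ∀ ⦃τ : ℂ⦄, 0 < τ.im → z (τ + 1) = -y τ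
  fst_neg_one_div : ∀ ⦃τ : ℂ⦄, 0 < τ.im → x (-1 / τ) = -τ ^ 2 * z τ
  snd_neg_one_div : ∀ ⦃τ : ℂ⦄, 0 < τ.im → y (-1 / τ) = -τ ^ 2 * y τ
  trd_neg_one_div : ∀ ⦃τ : ℂ⦄, 0 < τ.im → z (-1 / τ) = -τ ^ 2 * x τ

namespace IsWeightTwoTriple

variable {x y z x' y' z' : ℂ → ℂ}

lemma sub (h : IsWeightTwoTriple x y z) (h' : IsWeightTwoTriple x' y' z') :
    IsWeightTwoTriple (fun τ ↦ x τ - x' τ) (fun τ ↦ y τ - y' τ) (fun τ ↦ z τ - z' τ) where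
  fst_add_one τ hτ := by rw [h.fst_add_one hτ, h'.fst_add_one hτ]; ring
  snd_add_one τ hτ := by rw [h.snd_add_one hτ, h'.snd_add_one hτ]; ring
  trd_add_one τ hτ := by rw [h.trd_add_one hτ, h'.trd_add_one hτ]; ring
  fst_neg_one_div τ hτ := by rw [h.fst_neg_one_div hτ, h'.fst_neg_one_div hτ]; ring
  snd_neg_one_div τ hτ := by rw [h.snd_neg_one_div hτ, h'.snd_neg_one_div hτ]; ring
  trd_neg_one_div τ hτ := by rw [h.trd_neg_one_div hτ, h'.trd_neg_one_div hτ]; ring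

section Vanishing

variable (h : IsWeightTwoTriple x y z) (hx : HolomorphicWithLimit x 0)
  (hy : HolomorphicWithLimit y 0) (hz : HolomorphicWithLimit z 0) {τ : ℂ} (hτ : 0 < τ.im)
include h hx hy hz hτ

lemma add_add_eq_zero : x τ + y τ + z τ = 0 := by
  have hol : HolomorphicWithLimit (fun τ ↦ (x τ + y τ + z τ) ^ 2) 0 := by
    simpa using ((hx.add hy).add hz).pow 2
  refine pow_eq_zero_iff two_ne_zero |>.mp <|
    hol.eq_zero_of_weight_lt_twelve (k := 4) (by norm_num) (fun τ hτ ↦ ?_) (fun τ hτ ↦ ?_) hτ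
  · rw [h.fst_add_one hτ, h.snd_add_one hτ, h.trd_add_one hτ]
    ring
  · rw [h.fst_neg_one_div hτ, h.snd_neg_one_div hτ, h.trd_neg_one_div hτ, zpow_ofNat]
    ring

lemma sq_add_sq_add_sq_eq_zero : x τ ^ 2 + y τ ^ 2 + z τ ^ 2 = 0 := by
  have hol : HolomorphicWithLimit (fun τ ↦ x τ ^ 2 + y τ ^ 2 + z τ ^ 2) 0 := by
    simpa using ((hx.pow 2).add (hy.pow 2)).add (hz.pow 2)
  refine hol.eq_zero_of_weight_lt_twelve (k := 4) (by norm_num) (fun τ hτ ↦ ?_)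
    (fun τ hτ ↦ ?_) hτ
  · rw [h.fst_add_one hτ, h.snd_add_one hτ, h.trd_add_one hτ]
    ring
  · rw [h.fst_neg_one_div hτ, h.snd_neg_one_div hτ, h.trd_neg_one_div hτ, zpow_ofNat]
    ring

lemma vandermonde_eq_zero : (x τ - y τ) * (y τ - z τ) * (z τ - x τ) = 0 := by
  have hol : HolomorphicWithLimit (fun τ ↦ (x τ - y τ) * (y τ - z τ) * (z τ - x τ)) 0 := by
    simpa using ((hx.sub hy).mul (hy.sub hz)).mul (hz.sub hx)
  refine hol.eq_zero_of_weight_lt_twelve (k := 6) (by norm_num) (fun τ hτ ↦ ?_)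
    (fun τ hτ ↦ ?_) hτ
  · rw [h.fst_add_one hτ, h.snd_add_one hτ, h.trd_add_one hτ]
    ring
  · rw [h.fst_neg_one_div hτ, h.snd_neg_one_div hτ, h.trd_neg_one_div hτ, zpow_ofNat]
    ring

theorem eq_zero : x τ = 0 ∧ y τ = 0 ∧ z τ = 0 :=
  eq_zero_of_add_eq_zero_of_sq_add_eq_zero_of_vandermonde_eq_zero (by norm_num)
    (h.add_add_eq_zero hx hy hz hτ) (h.sq_add_sq_add_sq_eq_zero hx hy hz hτ)
    (h.vandermonde_eq_zero hx hy hz hτ)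

end Vanishing

theorem eq_of_limit_eq {a b c : ℂ} (h : IsWeightTwoTriple x y z) (h' : IsWeightTwoTriple x' y' z')
    (hx : HolomorphicWithLimit x a) (hx' : HolomorphicWithLimit x' a)
    (hy : HolomorphicWithLimit y b) (hy' : HolomorphicWithLimit y' b)
    (hz : HolomorphicWithLimit z c) (hz' : HolomorphicWithLimit z' c) {τ : ℂ} (hτ : 0 < τ.im) :
    x τ = x' τ ∧ y τ = y' τ ∧ z τ = z' τ := by
  simpa only [sub_eq_zero] using (h.sub h').eq_zero (by simpa using hx.sub hx')
    (by simpa using hy.sub hy') (by simpa using hz.sub hz') hτ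

end IsWeightTwoTriple

/-! ### The Eisenstein side -/

lemma E2_coe (z : ℍ) : E2 z = EisensteinSeries.E2 z := by
  rw [EisensteinSeries.E2_eq_tsum_cexp, E2, tsum_pnat_eq_tsum_succ
    (f := fun n ↦ (ArithmeticFunction.sigma 1 n : ℂ) * cexp (2 * Real.pi * I * z) ^ n)]
  congr! 4 with n
  rw [sigma1, ArithmeticFunction.sigma_one_apply, ← Complex.exp_nat_mul]
  congr 2
  push_cast
  ring

lemma E2_moebius_s14 (γ : SL2Z) {τ : ℂ} (hτ : 0 < τ.im) :
    E2 (moebius γ τ) = ((γ 1 0 : ℂ) * τ + γ 1 1) ^ 2 * E2 τ +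
      6 / (Real.pi * I) * γ 1 0 * ((γ 1 0 : ℂ) * τ + γ 1 1) := by
  let z : ℍ := ⟨τ, hτ⟩
  have smul_eq : ((γ • z : ℍ) : ℂ) = moebius γ τ := by
    rw [coe_specialLinearGroup_apply]
    rfl
  have denom_eq : denom γ (z : ℂ) = (γ 1 0 : ℂ) * τ + γ 1 1 := by
    rw [ModularGroup.denom_apply]
  have h_denom : (γ 1 0 : ℂ) * τ + γ 1 1 ≠ 0 := denom_eq ▸ denom_ne_zero γ z
  have h := congrFun (EisensteinSeries.E2_slash_action γ) z
  simp only [ModularForm.SL_slash_apply, ← E2_coe, smul_eq, denom_eq, Pi.sub_apply, Pi.smul_apply,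
    EisensteinSeries.D2, riemannZeta_two, smul_eq_mul] at h
  rw [_root_.zpow_neg, zpow_ofNat] at h
  field_simp at h ⊢
  linear_combination I * h - 6 * γ 1 0 * ((γ 1 0 : ℂ) * τ + γ 1 1) * I_sq

lemma E2_add_one {τ : ℂ} (hτ : 0 < τ.im) : E2 (τ + 1) = E2 τ := by
  simpa [moebius, ModularGroup.T] using E2_moebius_s14 ModularGroup.T hτ

lemma E2_neg_one_div {τ : ℂ} (hτ : 0 < τ.im) :
    E2 (-1 / τ) = τ ^ 2 * E2 τ + 6 / (Real.pi * I) * τ := by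
  simpa [moebius, ModularGroup.S] using E2_moebius_s14 ModularGroup.S hτ

lemma holomorphicWithLimit_E2 : HolomorphicWithLimit E2 1 := by
  have hsum (z : ℍ) := EisensteinSeries.hasSum_qExpansion_E2 (z := z)
  refine (HolomorphicWithLimit.of_hasSum_qExpansion one_pos E2_mdifferentiable
    (by simpa only [Function.Periodic.qParam, ofReal_one, div_one] using hsum)).congr
      fun τ hτ ↦ ?_
  rw [Function.comp_apply, ofComplex_apply_of_im_pos hτ, ← E2_coe]

lemma E2_neg_one_div_div_two {τ : ℂ} (hτ : 0 < τ.im) :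
    E2 (-1 / τ / 2) = 4 * τ ^ 2 * E2 (2 * τ) + 12 / (Real.pi * I) * τ := by
  rw [show -1 / τ / 2 = -1 / (2 * τ) by rw [div_div, mul_comm], E2_neg_one_div (by simpa)]
  ring

lemma E2_two_mul_neg_one_div {τ : ℂ} (hτ : 0 < τ.im) :
    E2 (2 * (-1 / τ)) = τ ^ 2 / 4 * E2 (τ / 2) + 3 / (Real.pi * I) * τ := by
  rw [show 2 * (-1 / τ) = -1 / (τ / 2) by field_simp, E2_neg_one_div (by simpa)]
  ring

lemma E2_neg_one_div_add_one_div_two {τ : ℂ} (hτ : 0 < τ.im) :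
    E2 ((-1 / τ + 1) / 2) = τ ^ 2 * E2 ((τ + 1) / 2) + 12 / (Real.pi * I) * τ := by
  let γ : SL2Z := ⟨!![1, -1; 2, -1], by simp [det_fin_two_of]⟩
  have moebius_eq : moebius γ ((τ + 1) / 2) = (-1 / τ + 1) / 2 := by
    have hτ0 : τ ≠ 0 := UpperHalfPlane.ne_zero ⟨τ, hτ⟩
    simp only [γ, moebius, of_apply, cons_val, Int.cast_one, Int.cast_neg, Int.cast_ofNat]
    rw [show 2 * ((τ + 1) / 2) + -1 = τ by ring]
    field_simp
    ring
  rw [← moebius_eq, E2_moebius_s14 γ (by simpa)]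
  simp only [γ, of_apply, cons_val, Int.cast_neg, Int.cast_one, Int.cast_ofNat]
  ring

/-- The Hecke relation `T₂ E₂ = 3 E₂`, in a form that only involves values of `E2`. -/
lemma E2_div_two_add_E2_add_one_div_two {τ : ℂ} (hτ : 0 < τ.im) :
    E2 (τ / 2) + E2 ((τ + 1) / 2) = 6 * E2 τ - 4 * E2 (2 * τ) := by
  have hol : HolomorphicWithLimit
      (fun τ ↦ E2 (τ / 2) + E2 ((τ + 1) / 2) - (6 * E2 τ - 4 * E2 (2 * τ))) 0 := by
    have div_two := holomorphicWithLimit_E2.comp_affine (g := fun τ ↦ τ / 2) one_half_pos 0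
      (by intro τ; push_cast; ring)
    have add_one_div_two := holomorphicWithLimit_E2.comp_affine (g := fun τ ↦ (τ + 1) / 2)
      one_half_pos (1 / 2) (by intro τ; push_cast; ring)
    have two_mul := holomorphicWithLimit_E2.comp_affine (g := fun τ ↦ 2 * τ) two_pos 0 (by simp)
    convert (div_two.add add_one_div_two).sub
      ((holomorphicWithLimit_E2.const_mul 6).sub (two_mul.const_mul 4)) using 1
    norm_num
  refine sub_eq_zero.mp <| hol.eq_zero_of_weight_lt_twelve (k := 2) (by norm_num) (fun τ hτ ↦ ?_)
    (fun τ hτ ↦ ?_) hτ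
  · rw [show (τ + 1 + 1) / 2 = τ / 2 + 1 by ring, show 2 * (τ + 1) = 2 * τ + 1 + 1 by ring,
      E2_add_one (by simpa), E2_add_one hτ, E2_add_one (by simpa), E2_add_one (by simpa)]
    ring
  · rw [E2_neg_one_div_div_two hτ, E2_neg_one_div_add_one_div_two hτ, E2_neg_one_div hτ,
      E2_two_mul_neg_one_div hτ, zpow_ofNat]
    ring

lemma F₂_add_one {τ : ℂ} (hτ : 0 < τ.im) : F₂ (τ + 1) = F₂ τ := by
  rw [F₂, F₂, show 2 * (τ + 1) = 2 * τ + 1 + 1 by ring, E2_add_one hτ, E2_add_one (by simpa),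
    E2_add_one (by simpa)]

lemma H₂_add_one {τ : ℂ} (hτ : 0 < τ.im) : H₂ (τ + 1) = 2 * F₂ τ - H₂ τ := by
  rw [H₂, H₂, F₂, E2_add_one hτ]
  linear_combination -E2_div_two_add_E2_add_one_div_two hτ

lemma F₂_neg_one_div {τ : ℂ} (hτ : 0 < τ.im) : F₂ (-1 / τ) = -τ ^ 2 / 2 * H₂ τ := by
  rw [F₂, H₂, E2_two_mul_neg_one_div hτ, E2_neg_one_div hτ]
  ring

lemma H₂_neg_one_div {τ : ℂ} (hτ : 0 < τ.im) : H₂ (-1 / τ) = -2 * τ ^ 2 * F₂ τ := by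
  rw [F₂, H₂, E2_neg_one_div_div_two hτ, E2_neg_one_div hτ]
  ring

lemma holomorphicWithLimit_F₂ : HolomorphicWithLimit F₂ 1 := by
  have two_mul := holomorphicWithLimit_E2.comp_affine (g := fun τ ↦ 2 * τ) two_pos 0 (by simp)
  rw [show (1 : ℂ) = 2 * 1 - 1 by norm_num]
  exact (two_mul.const_mul 2).sub holomorphicWithLimit_E2

lemma holomorphicWithLimit_H₂ : HolomorphicWithLimit H₂ 1 := by
  have div_two := holomorphicWithLimit_E2.comp_affine (g := fun τ ↦ τ / 2) one_half_pos 0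
    (by intro τ; push_cast; ring)
  rw [show (1 : ℂ) = 2 * 1 - 1 by norm_num]
  exact (holomorphicWithLimit_E2.const_mul 2).sub div_two

lemma isWeightTwoTriple_F₂_H₂ :
    IsWeightTwoTriple (fun τ ↦ -(2 / 3) * F₂ τ + 2 / 3 * H₂ τ)
      (fun τ ↦ -(2 / 3 * F₂ τ + 1 / 3 * H₂ τ)) (fun τ ↦ 4 / 3 * F₂ τ - 1 / 3 * H₂ τ) where
  fst_add_one τ hτ := by rw [F₂_add_one hτ, H₂_add_one hτ]; ring
  snd_add_one τ hτ := by rw [F₂_add_one hτ, H₂_add_one hτ]; ring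
  trd_add_one τ hτ := by rw [F₂_add_one hτ, H₂_add_one hτ]; ring
  fst_neg_one_div τ hτ := by rw [F₂_neg_one_div hτ, H₂_neg_one_div hτ]; ring
  snd_neg_one_div τ hτ := by rw [F₂_neg_one_div hτ, H₂_neg_one_div hτ]; ring
  trd_neg_one_div τ hτ := by rw [F₂_neg_one_div hτ, H₂_neg_one_div hτ]; ring

/-! ### The theta constants -/

lemma hasSum_int_of_even_of_odd {α : Type*} [AddCommMonoid α] [TopologicalSpace α]
    [ContinuousAdd α] {f : ℤ → α} {a b : α} (h_even : HasSum (fun n ↦ f (2 * n)) a)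
    (h_odd : HasSum (fun n ↦ f (2 * n + 1)) b) : HasSum f (a + b) := by
  have injective_two_mul := mul_right_injective₀ (two_ne_zero' ℤ)
  have injective_two_mul_add_one := (add_left_injective 1).comp injective_two_mul
  refine (injective_two_mul.hasSum_range_iff.mpr h_even).add_isCompl ?_
    (injective_two_mul_add_one.hasSum_range_iff.mpr h_odd)
  have range_even : Set.range (fun n : ℤ ↦ 2 * n) = {n | Even n} := by
    ext n
    simp only [Set.mem_range, Set.mem_ofPred_eq, even_iff_exists_two_mul, eq_comm]
  have range_odd : Set.range ((· + 1) ∘ fun n : ℤ ↦ 2 * n) = {n | Odd n} := by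
    ext n
    simp only [Set.mem_range, Set.mem_ofPred_eq, Odd, eq_comm, Function.comp_apply]
  rw [range_even, range_odd]
  exact Int.isCompl_even_odd

lemma θ₃_eq_jacobiTheta (τ : ℂ) : θ₃ τ = jacobiTheta τ :=
  tsum_congr fun n ↦ by rw [mul_right_comm]

lemma neg_one_zpow_eq_exp (n : ℤ) : (-1 : ℂ) ^ n = exp (n * (Real.pi * I)) := by
  rw [exp_int_mul, exp_pi_mul_I]

lemma θ₄_eq_jacobiTheta₂ (τ : ℂ) : θ₄ τ = jacobiTheta₂ (1 / 2) τ := by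
  refine tsum_congr fun n ↦ ?_
  rw [neg_one_zpow_eq_exp, ← Complex.exp_add, jacobiTheta₂_term]
  ring_nf

lemma θ₂_eq_exp_mul_jacobiTheta₂ (τ : ℂ) :
    θ₂ τ = exp (Real.pi * I * τ / 4) * jacobiTheta₂ (τ / 2) τ := by
  rw [θ₂, jacobiTheta₂, ← tsum_mul_left]
  refine tsum_congr fun n ↦ ?_
  rw [jacobiTheta₂_term, ← Complex.exp_add]
  ring_nf

lemma θ₃_div_four {τ : ℂ} (hτ : 0 < τ.im) : θ₃ (τ / 4) = θ₃ τ + θ₂ τ := by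
  let term (n : ℤ) : ℂ := exp (Real.pi * I * (τ / 4) * (n : ℂ) ^ 2)
  have summable_term : Summable term := by
    refine ((summable_jacobiTheta₂_term_iff 0 (τ / 4)).mpr (by simpa)).congr fun n ↦ ?_
    rw [jacobiTheta₂_term, mul_zero, zero_add, mul_right_comm]
  have even_terms : HasSum (fun n ↦ term (2 * n)) (θ₃ τ) := by
    rw [show θ₃ τ = ∑' n, term (2 * n) from
      tsum_congr fun n ↦ congrArg exp (by push_cast; ring)]
    exact (summable_term.comp_injective (mul_right_injective₀ (two_ne_zero' ℤ))).hasSum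
  have odd_terms : HasSum (fun n ↦ term (2 * n + 1)) (θ₂ τ) := by
    rw [show θ₂ τ = ∑' n, term (2 * n + 1) from
      tsum_congr fun n ↦ congrArg exp (by push_cast; ring)]
    exact (summable_term.comp_injective
      ((add_left_injective 1).comp (mul_right_injective₀ (two_ne_zero' ℤ)))).hasSum
  exact (hasSum_int_of_even_of_odd even_terms odd_terms).tsum_eq

lemma exp_add_pi_mul_I_mul_int_mul_add_one (z : ℂ) (n : ℤ) :
    exp (z + Real.pi * I * (n * (n + 1))) = exp z := by
  obtain ⟨k, hk⟩ := Int.even_mul_succ_self n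
  have hk' : (n : ℂ) * (n + 1) = k + k := mod_cast hk
  rw [hk', exp_eq_exp_iff_exists_int]
  exact ⟨k, by ring⟩

lemma θ₃_add_one (τ : ℂ) : θ₃ (τ + 1) = θ₄ τ := by
  refine tsum_congr fun n ↦ ?_
  rw [neg_one_zpow_eq_exp, ← Complex.exp_add,
    ← exp_add_pi_mul_I_mul_int_mul_add_one (n * (Real.pi * I) + _) (-n)]
  push_cast
  ring_nf

lemma θ₄_add_one (τ : ℂ) : θ₄ (τ + 1) = θ₃ τ := by
  rw [← θ₃_add_one, add_assoc, one_add_one_eq_two, add_comm, θ₃_eq_jacobiTheta,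
    θ₃_eq_jacobiTheta, jacobiTheta_two_add]

lemma θ₂_add_one (τ : ℂ) : θ₂ (τ + 1) = exp (Real.pi * I / 4) * θ₂ τ := by
  rw [θ₂, θ₂, ← tsum_mul_left]
  refine tsum_congr fun n ↦ ?_
  rw [← Complex.exp_add, ← exp_add_pi_mul_I_mul_int_mul_add_one (Real.pi * I / 4 + _) n]
  ring_nf

lemma jacobiTheta₂_neg_one_div_pow_four (z : ℂ) {τ : ℂ} (hτ : τ ≠ 0) :
    jacobiTheta₂ (z / τ) (-1 / τ) ^ 4 =
      -τ ^ 2 * exp (Real.pi * I * z ^ 2 / τ) ^ 4 * jacobiTheta₂ z τ ^ 4 := by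
  have root_pow_four : ((-I * τ) ^ (1 / 2 : ℂ)) ^ 4 = -τ ^ 2 := by
    rw [← cpow_nat_mul]
    norm_num [mul_pow]
  have h_exp_neg : exp (-Real.pi * I * z ^ 2 / τ) = (exp (Real.pi * I * z ^ 2 / τ))⁻¹ := by
    rw [← Complex.exp_neg]
    ring_nf
  rw [jacobiTheta₂_functional_equation z τ, h_exp_neg, mul_pow, mul_pow, div_pow, root_pow_four]
  field_simp

lemma θ₃_neg_one_div_pow_four {τ : ℂ} (hτ : τ ≠ 0) : θ₃ (-1 / τ) ^ 4 = -τ ^ 2 * θ₃ τ ^ 4 := by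
  simpa [θ₃_eq_jacobiTheta, jacobiTheta_eq_jacobiTheta₂] using
    jacobiTheta₂_neg_one_div_pow_four 0 hτ

lemma θ₄_neg_one_div_pow_four {τ : ℂ} (hτ : τ ≠ 0) : θ₄ (-1 / τ) ^ 4 = -τ ^ 2 * θ₂ τ ^ 4 := by
  have h := jacobiTheta₂_neg_one_div_pow_four (τ / 2) hτ
  rw [show τ / 2 / τ = 1 / 2 by field_simp, ← θ₄_eq_jacobiTheta₂,
    show Real.pi * I * (τ / 2) ^ 2 / τ = Real.pi * I * τ / 4 by field_simp; ring] at h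
  rw [h, θ₂_eq_exp_mul_jacobiTheta₂]
  ring

lemma θ₂_neg_one_div_pow_four {τ : ℂ} (hτ : τ ≠ 0) : θ₂ (-1 / τ) ^ 4 = -τ ^ 2 * θ₄ τ ^ 4 := by
  have h := θ₄_neg_one_div_pow_four (div_ne_zero (neg_ne_zero.mpr one_ne_zero) hτ)
  rw [show -1 / (-1 / τ) = τ by field_simp] at h
  rw [h]
  field_simp

lemma holomorphicWithLimit_θ₃ : HolomorphicWithLimit θ₃ 1 := by
  refine HolomorphicWithLimit.congr ⟨fun τ hτ ↦
    (differentiableAt_jacobiTheta hτ).differentiableWithinAt, ?_⟩ fun τ _ ↦ θ₃_eq_jacobiTheta τ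
  have exp_tendsto : Tendsto (fun τ : ℂ ↦ Real.exp (-Real.pi * τ.im)) I∞ (𝓝 0) :=
    Real.tendsto_exp_atBot.comp (tendsto_comap.const_mul_atTop_of_neg (by simp [Real.pi_pos]))
  simpa using (isBigO_at_im_infty_jacobiTheta_sub_one.trans_tendsto exp_tendsto).add_const 1

lemma holomorphicWithLimit_θ₄ : HolomorphicWithLimit θ₄ 1 :=
  (holomorphicWithLimit_θ₃.comp_affine (g := fun τ ↦ τ + 1) one_pos 1 (by simp)).congr
    fun τ _ ↦ (θ₃_add_one τ).symm

lemma holomorphicWithLimit_θ₂ : HolomorphicWithLimit θ₂ 0 := by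
  have div_four := holomorphicWithLimit_θ₃.comp_affine (a := 1 / 4) (g := fun τ ↦ τ / 4)
    (by norm_num) 0 (by intro τ; push_cast; ring)
  rw [← sub_self 1]
  exact (div_four.sub holomorphicWithLimit_θ₃).congr fun τ hτ ↦
    eq_sub_of_add_eq' (θ₃_div_four hτ).symm

lemma isWeightTwoTriple_θ_pow_four :
    IsWeightTwoTriple (fun τ ↦ θ₂ τ ^ 4) (fun τ ↦ -θ₃ τ ^ 4) (fun τ ↦ θ₄ τ ^ 4) where
  fst_add_one τ _ := by
    have root_pow_four : exp (Real.pi * I / 4) ^ 4 = -1 := by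
      rw [← exp_nat_mul, ← exp_pi_mul_I]
      ring_nf
    rw [θ₂_add_one, mul_pow, root_pow_four, neg_one_mul]
  snd_add_one τ _ := by rw [θ₃_add_one]
  trd_add_one τ _ := by rw [θ₄_add_one, neg_neg]
  fst_neg_one_div τ hτ := θ₂_neg_one_div_pow_four (UpperHalfPlane.ne_zero ⟨τ, hτ⟩)
  snd_neg_one_div τ hτ := by
    rw [θ₃_neg_one_div_pow_four (UpperHalfPlane.ne_zero ⟨τ, hτ⟩)]
    ring
  trd_neg_one_div τ hτ := θ₄_neg_one_div_pow_four (UpperHalfPlane.ne_zero ⟨τ, hτ⟩)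

/-- STATEMENT 16: the fourth powers of the theta constants expressed in terms of
`F₂` and `H₂`. -/
theorem theta_fourth_powers_from_F2_H2 (τ : ℂ) (hτ : 0 < τ.im) :
    θ₂ τ ^ 4 = -(2 / 3) * F₂ τ + 2 / 3 * H₂ τ ∧
    θ₃ τ ^ 4 = 2 / 3 * F₂ τ + 1 / 3 * H₂ τ ∧
    θ₄ τ ^ 4 = 4 / 3 * F₂ τ - 1 / 3 * H₂ τ := by
  have hF := holomorphicWithLimit_F₂
  have hH := holomorphicWithLimit_H₂
  obtain ⟨θ₂_eq, θ₃_eq, θ₄_eq⟩ := isWeightTwoTriple_θ_pow_four.eq_of_limit_eq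
    isWeightTwoTriple_F₂_H₂
    (holomorphicWithLimit_θ₂.pow 4)
    (by convert (hF.const_mul (-(2 / 3))).add (hH.const_mul (2 / 3)) using 1; norm_num)
    (holomorphicWithLimit_θ₃.pow 4).neg
    (by convert ((hF.const_mul (2 / 3)).add (hH.const_mul (1 / 3))).neg using 1; norm_num)
    (holomorphicWithLimit_θ₄.pow 4)
    (by convert (hF.const_mul (4 / 3)).sub (hH.const_mul (1 / 3)) using 1; norm_num)
    hτ
  exact ⟨θ₂_eq, neg_injective θ₃_eq, θ₄_eq⟩

end
end
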